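/- arXiv:1505.06146 — 6 statements merged into one kernel-verified Lean document; each statement's English description precedes it below -/
import Mathlib

section
/- Let k ≥ 2 and let w_0,…,w_k be real numbers. For t ∈ {1,…,k−1} and s ∈ {0,1} define Z_{s,t} = Σ_{ℓ=0}^{k−1−t} C(k−1−t, ℓ) (w_{ℓ+s} + w_{ℓ+s+t}), and define Z_{0,k} = w_0 and Z_{1,k} = w_k. Then Z_{0,t} = Z_{1,t} holds for every t ∈ {1,…,k} if and only if w_ℓ = w_{k−ℓ} for all ℓ ∈ {0,…,k}. -/
theorem key_aux (m t : ℕ) (w : ℕ → ℝ) :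
    (∑ ℓ ∈ Finset.range (m + 1), (m.choose ℓ : ℝ) * (w ℓ + w (ℓ + t)))
      - ∑ ℓ ∈ Finset.range (m + 1), (m.choose ℓ : ℝ) * (w (ℓ + 1) + w (ℓ + 1 + t))
    = ∑ ℓ ∈ Finset.range (m + 1), (m.choose ℓ : ℝ) *
        ((w ℓ - w (m + t + 1 - ℓ)) - (w (ℓ + 1) - w (m + t + 1 - (ℓ + 1)))) := by
  have h : ∑ ℓ ∈ Finset.range (m + 1), (m.choose ℓ : ℝ) * (w (ℓ + t) - w (ℓ + 1 + t))
      = ∑ ℓ ∈ Finset.range (m + 1), (m.choose ℓ : ℝ) *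
        (w (m + t + 1 - (ℓ + 1)) - w (m + t + 1 - ℓ)) := by
    rw [← Finset.sum_range_reflect]
    apply Finset.sum_congr rfl
    intro l hl
    have hl : l ≤ m := by simpa [Nat.lt_succ_iff] using hl
    have e1 : m + 1 - 1 - l = m - l := by omega
    have e2 : m + t + 1 - (l + 1) = m - l + t := by omega
    have e3 : m + t + 1 - l = m - l + 1 + t := by omega
    rw [e1, e2, e3, Nat.choose_symm hl]
  rw [← Finset.sum_sub_distrib]
  have h3 := congrArg
    (fun x => (∑ ℓ ∈ Finset.range (m + 1), (m.choose ℓ : ℝ) * (w ℓ - w (ℓ + 1))) + x) h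
  simp only [← Finset.sum_add_distrib] at h3
  convert h3 using 2 <;> ring

/-- characterisation of the solutions of the linear system
`Z_{0,t} = Z_{1,t}` (`t = 1, …, k`), where for `t ∈ {1,…,k-1}` and `s ∈ {0,1}` we set
`Z_{s,t} = Σ_{ℓ=0}^{k-1-t} C(k-1-t, ℓ) (w_{ℓ+s} + w_{ℓ+s+t})`, and `Z_{0,k} = w_0`,
`Z_{1,k} = w_k`.  The solutions are exactly the tuples with `w_ℓ = w_{k-ℓ}` for all
`ℓ ∈ {0,…,k}`. -/
theorem linear_system_iff_selfdual (k : ℕ) (hk : 2 ≤ k) (w : ℕ → ℝ) :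
    ((∀ t, 1 ≤ t → t ≤ k - 1 →
        (∑ ℓ ∈ Finset.range (k - t), ((k - 1 - t).choose ℓ : ℝ) * (w ℓ + w (ℓ + t)))
          = ∑ ℓ ∈ Finset.range (k - t),
              ((k - 1 - t).choose ℓ : ℝ) * (w (ℓ + 1) + w (ℓ + 1 + t)))
      ∧ w 0 = w k)
    ↔ ∀ ℓ ≤ k, w ℓ = w (k - ℓ) := by
  have key : ∀ m t, m + t + 1 = k →
      (((∑ ℓ ∈ Finset.range (k - t), ((k - 1 - t).choose ℓ : ℝ) * (w ℓ + w (ℓ + t)))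
          = ∑ ℓ ∈ Finset.range (k - t),
              ((k - 1 - t).choose ℓ : ℝ) * (w (ℓ + 1) + w (ℓ + 1 + t))) ↔
        ∑ ℓ ∈ Finset.range (m + 1), (m.choose ℓ : ℝ) *
        ((w ℓ - w (k - ℓ)) - (w (ℓ + 1) - w (k - (ℓ + 1)))) = 0) := by
    intro m t h
    have e1 : k - t = m + 1 := by omega
    have e2 : k - 1 - t = m := by omega
    rw [e1, e2, ← h, ← key_aux, sub_eq_zero]
  constructor
  · rintro ⟨h, h0⟩
    have step : ∀ m, m + 2 ≤ k → (w m - w (k - m)) - (w (m + 1) - w (k - (m + 1))) = 0 := by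
      intro m
      induction m using Nat.strong_induction_on with
      | _ m ih =>
        intro hm
        have h1 := (key m (k - 1 - m) (by omega)).1 (h _ (by omega) (by omega))
        rw [Finset.sum_range_succ, Finset.sum_eq_zero] at h1
        · simpa using h1
        · intro l hl
          have hl := Finset.mem_range.1 hl
          rw [ih l hl (by omega), mul_zero]
    have all : ∀ m, m + 1 ≤ k → w m - w (k - m) = 0 := by
      intro m
      induction m with
      | zero => intro _; simp [h0]
      | succ m ih =>
        intro hm
        have a := ih (by omega)
        have b := step m (by omega)
        linarith
    intro l hl
    rcases Nat.lt_or_ge l k with hlt | hge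
    · linarith [all l hlt]
    · have : l = k := by omega
      subst this
      simp [h0]
  · intro h
    refine ⟨fun t h1 h2 => (key (k - 1 - t) t (by omega)).2 ?_, by simpa using h 0 (by omega)⟩
    apply Finset.sum_eq_zero
    intro l hl
    have hl := Finset.mem_range.1 hl
    rw [← h l (by omega), ← h (l + 1) (by omega)]
    ring
end

section
/- Suppose 0 ≤ β₀ < 1. Then for all sufficiently large Δ, setting ε = 1/Δ, for all β, γ satisfying max{β₀−ε, 0} ≤ β < β₀+ε and 0 < γ < 1+ε, the 2-spin system with parameters β, γ and λ = 1 is antiferromagnetic (i.e. βγ < 1) and is in the non-uniqueness regime of the infinite Δ-regular tree; that is, the system of equations x = ((βy+1)/(y+γ))^{Δ−1}, y = ((βx+1)/(x+γ))^{Δ−1} has more than one solution (x,y) with x,y > 0. -/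
lemma ns_anti {β γ x y : ℝ} (hb : 0 ≤ β) (hg : 0 < γ) (h : β * γ < 1) (hx : 0 ≤ x) (hxy : x ≤ y)
    (d : ℕ) : ((β * y + 1) / (y + γ)) ^ d ≤ ((β * x + 1) / (x + γ)) ^ d := by
  have hy : 0 ≤ y := hx.trans hxy
  have : 0 ≤ (β * y + 1) / (y + γ) := by positivity
  apply pow_le_pow_left₀ this
  rw [div_le_div_iff₀ (by positivity) (by positivity)]
  nlinarith [mul_nonneg (sub_nonneg.2 hxy) (sub_nonneg.2 h.le)]

lemma ns_core {β γ δ c : ℝ} {d : ℕ} (hb : 0 ≤ β) (hδ : 0 < δ) (hβ : β ≤ 1 - δ)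
    (hg : 0 < γ) (hg2 : γ ≤ 1 + 1 / (d : ℝ)) (h : β * γ < 1) (hc : 0 < c) (hd : 4 ≤ d)
    (hcd : c ≤ (1 - 2 / (d : ℝ)) ^ d) (hdc : 2 ≤ d * (δ * c)) (hc1 : 1 / (d : ℝ) < c)
    (hη : (1 - δ * c / (2 * (c + 2))) ^ d ≤ 1 / (d : ℝ)) :
    ∃ p q : ℝ, 0 < p ∧ 0 < q ∧ p < q ∧ p = ((β * q + 1) / (q + γ)) ^ d ∧
      q = ((β * p + 1) / (p + γ)) ^ d := by
  have hd' : (4 : ℝ) ≤ d := by exact_mod_cast hd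
  obtain ⟨e, he⟩ : ∃ e : ℝ, e = 1 / (d : ℝ) := ⟨_, rfl⟩
  have hde : (d : ℝ) * e = 1 := by rw [he]; field_simp
  have he0 : 0 < e := by rw [he]; positivity
  have he4 : e ≤ 1 / 4 := by nlinarith
  have h2 : 2 / (d : ℝ) = 2 * e := by rw [he]; ring
  rw [h2] at hcd
  rw [← he] at hg2 hc1 hη
  obtain ⟨t, ht⟩ : ∃ t : ℝ, t = 1 + e - γ := ⟨_, rfl⟩
  have ht0 : 0 ≤ t := by linarith
  have hγ : γ = 1 + e - t := by linarith
  set f : ℝ → ℝ := fun x => ((β * x + 1) / (x + γ)) ^ d with hf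
  have hanti : ∀ x y, 0 ≤ x → x ≤ y → f y ≤ f x := fun x y hx hxy => ns_anti hb hg h hx hxy d
  have hpos : ∀ x, 0 ≤ x → 0 < f x := fun x hx => by simp only [hf]; positivity
  have hcont : ContinuousOn f (Set.Ici 0) := by
    intro x hx
    have hx : 0 ≤ x := hx
    have : x + γ ≠ 0 := by positivity
    apply ContinuousAt.continuousWithinAt
    simp only [hf]
    fun_prop (disch := assumption)
  have hdt : 0 ≤ (d : ℝ) * t := by positivity
  have hb0 : c * (1 + d * t) ≤ f e := by
    have e1 : (1 - 2 * e) * (1 + t) ≤ (β * e + 1) / (e + γ) := by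
      rw [le_div_iff₀ (by positivity), hγ]
      nlinarith [mul_nonneg hb he0.le, mul_nonneg he0.le ht0, sq_nonneg (t - 2 * e), mul_nonneg he0.le (sq_nonneg t), mul_nonneg (mul_nonneg he0.le he0.le) ht0, sq_nonneg t]
    calc c * (1 + d * t) ≤ (1 - 2 * e) ^ d * (1 + t) ^ d := by
          apply mul_le_mul hcd _ (by positivity) (hc.le.trans hcd)
          exact one_add_mul_le_pow (by linarith) d
      _ = ((1 - 2 * e) * (1 + t)) ^ d := by rw [mul_pow]
      _ ≤ f e := pow_le_pow_left₀ (mul_nonneg (by linarith) (by linarith)) e1 d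
  have hfb : f (c * (1 + d * t)) ≤ e := by
    refine le_trans (pow_le_pow_left₀ (by positivity) ?_ d) hη
    rw [div_le_iff₀ (by positivity)]
    obtain ⟨b, hbd⟩ : ∃ b, b = c * (1 + d * t) := ⟨_, rfl⟩
    rw [← hbd]
    have hb0' : 0 < b := by rw [hbd]; positivity
    have k1 : δ * c / (2 * (c + 2)) * (b + γ) ≤ δ * b / 2 := by
      rw [div_mul_eq_mul_div, div_le_div_iff₀ (by positivity) (by positivity)]
      have : c * (b + γ) ≤ b * (c + 2) := by
        have : c * γ ≤ c * (1 + d * t) * 2 := by nlinarith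
        nlinarith
      nlinarith
    have k2 : t ≤ δ * b / 2 := by
      rw [hbd]
      nlinarith [mul_le_mul_of_nonneg_right hdc ht0, mul_pos hδ hc]
    have k3 : β * b ≤ (1 - δ) * b := by nlinarith
    rw [sub_mul, one_mul]
    linarith
  have hffe : f (f e) ≤ e := (hanti _ _ (by positivity) hb0).trans hfb
  have hc2 : ContinuousOn (fun x => f (f x) - x) (Set.Icc 0 e) := by
    refine ContinuousOn.sub ?_ continuousOn_id
    refine hcont.comp (hcont.mono fun x hx => hx.1) ?_
    intro x hx
    exact (hpos x hx.1).le
  obtain ⟨p, hp, hp2⟩ := intermediate_value_Icc' he0.le hc2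
    (show (0 : ℝ) ∈ Set.Icc (f (f e) - e) (f (f 0) - 0) from
      ⟨by linarith, by linarith [hpos _ (hpos 0 le_rfl).le]⟩)
  have hp3 : p = f (f p) := by simp only at hp2; linarith
  have hq := hpos p hp.1
  refine ⟨p, f p, ?_, hq, ?_, hp3, rfl⟩
  · rw [hp3]; exact hpos _ hq.le
  · have := hanti _ _ hp.1 hp.2
    have := hp.2
    nlinarith


/-- Lemma 3.4: if `0 ≤ β₀ < 1` then, for all sufficiently large `Δ`,
with `ε = 1/Δ`, every pair `(β, γ)` with `max (β₀ - ε) 0 ≤ β < β₀ + ε` and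
`0 < γ < 1 + ε` yields an antiferromagnetic 2-spin system (`βγ < 1`) with no external
field (`λ = 1`) that is in the non-uniqueness regime of the infinite `Δ`-regular tree,
i.e. the tree recursion `x = ((βy+1)/(y+γ))^{Δ-1}`, `y = ((βx+1)/(x+γ))^{Δ-1}` has more
than one positive solution `(x, y)`. -/
theorem nonuniqueness_strip (β₀ : ℝ) (h0 : 0 ≤ β₀) (h1 : β₀ < 1) :
    ∃ Δ₀ : ℕ, ∀ Δ : ℕ, Δ₀ ≤ Δ →
      ∀ β γ : ℝ, max (β₀ - 1 / (Δ : ℝ)) 0 ≤ β → β < β₀ + 1 / (Δ : ℝ) →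
        0 < γ → γ < 1 + 1 / (Δ : ℝ) →
        β * γ < 1 ∧
        ∃ x y x' y' : ℝ, 0 < x ∧ 0 < y ∧ 0 < x' ∧ 0 < y' ∧
          x = ((β * y + 1) / (y + γ)) ^ (Δ - 1) ∧
          y = ((β * x + 1) / (x + γ)) ^ (Δ - 1) ∧
          x' = ((β * y' + 1) / (y' + γ)) ^ (Δ - 1) ∧
          y' = ((β * x' + 1) / (x' + γ)) ^ (Δ - 1) ∧
          (x, y) ≠ (x', y') := by
  obtain ⟨δ, hδ⟩ : ∃ δ : ℝ, δ = (1 - β₀) / 2 := ⟨_, rfl⟩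
  have hδ0 : 0 < δ := by linarith
  have hδ1 : δ < 1 := by linarith
  obtain ⟨c, hcd⟩ : ∃ c : ℝ, c = Real.exp (-3) := ⟨_, rfl⟩
  have hc : 0 < c := by rw [hcd]; positivity
  have t0 : Filter.Tendsto (fun d : ℕ => (d : ℝ)) Filter.atTop Filter.atTop :=
    tendsto_natCast_atTop_atTop
  have t1 : Filter.Tendsto (fun d : ℕ => 1 / (d : ℝ)) Filter.atTop (nhds 0) :=
    tendsto_one_div_atTop_nhds_zero_nat
  have t2 : Filter.Tendsto (fun d : ℕ => (1 + (-2) / (d : ℝ)) ^ d) Filter.atTop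
      (nhds (Real.exp (-2))) := Real.tendsto_one_add_div_pow_exp (-2)
  have hη0 : 0 < δ * c / (2 * (c + 2)) := by positivity
  have hη1 : δ * c / (2 * (c + 2)) < 1 := by
    rw [div_lt_one (by positivity)]; nlinarith
  have t3 := tendsto_self_mul_const_pow_of_lt_one (r := 1 - δ * c / (2 * (c + 2)))
    (by linarith) (by linarith)
  have hcl : c < Real.exp (-2) := by rw [hcd]; exact Real.exp_lt_exp.2 (by norm_num)
  have ev := ((((t1.eventually_lt_const hδ0).and (t1.eventually_lt_const hc)).and
    (t2.eventually_const_lt hcl)).and (t3.eventually_lt_const one_pos)).and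
    ((t0.eventually_ge_atTop (2 / (δ * c))).and (Filter.eventually_ge_atTop 4))
  obtain ⟨N, hN⟩ := Filter.eventually_atTop.1 ev
  refine ⟨N + 1, fun Δ hΔ β γ hβ1 hβ2 hγ0 hγ1 => ?_⟩
  obtain ⟨d, rfl⟩ : ∃ d, Δ = d + 1 := ⟨Δ - 1, by omega⟩
  obtain ⟨⟨⟨⟨a1, a2⟩, a3⟩, a4⟩, a5, a6⟩ := hN d (by omega)
  have hd0 : (0 : ℝ) < d := by exact_mod_cast (by omega : 0 < d)
  have hle : 1 / ((d + 1 : ℕ) : ℝ) ≤ 1 / (d : ℝ) := by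
    apply one_div_le_one_div_of_le hd0
    push_cast; linarith
  have hb : 0 ≤ β := (le_max_right _ _).trans hβ1
  have hbδ : β ≤ 1 - δ := by linarith
  have hbg : β * γ < 1 := by nlinarith
  refine ⟨hbg, ?_⟩
  obtain ⟨p, q, hp, hq, hpq, e1, e2⟩ := ns_core (d := d) hb hδ0 hbδ hγ0 (by linarith) hbg hc a6
    (by rw [sub_eq_add_neg, ← neg_div]; exact a3.le)
    (by rwa [div_le_iff₀ (by positivity)] at a5) a2
    (by rw [le_div_iff₀ hd0]; linarith)
  refine ⟨p, q, q, p, hp, hq, hq, hp, e1, e2, e2, e1, ?_⟩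
  intro h
  exact hpq.ne (Prod.mk.inj h).1
end

section
/- Let β, γ > 0, λ > 0 and let Δ be a positive integer. Set β' = √(βγ) and λ' = λ(√β/√γ)^Δ. For positive reals x, y, set x' = (√β/√γ)x and y' = (√β/√γ)y. Then (x,y) satisfies the pair of equations x·(βy+1)/(y+γ) = λ·((βy+1)/(y+γ))^Δ and y·(βx+1)/(x+γ) = λ·((βx+1)/(x+γ))^Δ if and only if (x',y') satisfies x'·(β'y'+1)/(y'+β') = λ'·((β'y'+1)/(y'+β'))^Δ and y'·(β'x'+1)/(x'+β') = λ'·((β'x'+1)/(x'+β'))^Δ. In particular, the positive solutions of the first system are in one-to-one correspondence with the positive solutions of the second. -/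
/-- from the proof of Corollary 3.2: the change of variables
`β' = √(βγ)`, `λ' = λ(√β/√γ)^Δ`, `x' = (√β/√γ)x`, `y' = (√β/√γ)y` transforms the
tree fixed-point system for the 2-spin model with parameters `(β, γ, λ)` into the one
for the Ising-form model with parameters `(β', β', λ')`; since the map `x ↦ (√β/√γ)x`
is a bijection of the positive reals, the positive solutions of the two systems are in
one-to-one correspondence. -/
theorem tree_recursion_ising_correspondence
    (β γ lam : ℝ) (hβ : 0 < β) (hγ : 0 < γ) (hlam : 0 < lam)
    (Δ : ℕ) (hΔ : 0 < Δ) (x y : ℝ) (hx : 0 < x) (hy : 0 < y) :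
    (x * ((β * y + 1) / (y + γ)) = lam * ((β * y + 1) / (y + γ)) ^ Δ ∧
        y * ((β * x + 1) / (x + γ)) = lam * ((β * x + 1) / (x + γ)) ^ Δ)
      ↔
    ((Real.sqrt β / Real.sqrt γ) * x *
          ((Real.sqrt (β * γ) * ((Real.sqrt β / Real.sqrt γ) * y) + 1) /
            ((Real.sqrt β / Real.sqrt γ) * y + Real.sqrt (β * γ)))
        = lam * (Real.sqrt β / Real.sqrt γ) ^ Δ *
          ((Real.sqrt (β * γ) * ((Real.sqrt β / Real.sqrt γ) * y) + 1) /
            ((Real.sqrt β / Real.sqrt γ) * y + Real.sqrt (β * γ))) ^ Δ ∧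
      (Real.sqrt β / Real.sqrt γ) * y *
          ((Real.sqrt (β * γ) * ((Real.sqrt β / Real.sqrt γ) * x) + 1) /
            ((Real.sqrt β / Real.sqrt γ) * x + Real.sqrt (β * γ)))
        = lam * (Real.sqrt β / Real.sqrt γ) ^ Δ *
          ((Real.sqrt (β * γ) * ((Real.sqrt β / Real.sqrt γ) * x) + 1) /
            ((Real.sqrt β / Real.sqrt γ) * x + Real.sqrt (β * γ))) ^ Δ) := by
  have hb : 0 < Real.sqrt β := Real.sqrt_pos.mpr hβ
  have hg : 0 < Real.sqrt γ := Real.sqrt_pos.mpr hγ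
  have hb2 : Real.sqrt β * Real.sqrt β = β := Real.mul_self_sqrt hβ.le
  have hg2 : Real.sqrt γ * Real.sqrt γ = γ := Real.mul_self_sqrt hγ.le
  have hm : Real.sqrt (β * γ) = Real.sqrt β * Real.sqrt γ := Real.sqrt_mul hβ.le γ
  have hr : 0 < Real.sqrt β / Real.sqrt γ := div_pos hb hg
  have h1 : Real.sqrt (β * γ) * (Real.sqrt β / Real.sqrt γ) = β := by
    rw [hm]
    field_simp
    linarith
  have h2 : Real.sqrt (β * γ) = Real.sqrt β / Real.sqrt γ * γ := by
    rw [hm, div_mul_eq_mul_div, eq_div_iff hg.ne', mul_assoc, hg2]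
  have key : ∀ z : ℝ, (Real.sqrt (β * γ) * ((Real.sqrt β / Real.sqrt γ) * z) + 1) /
      ((Real.sqrt β / Real.sqrt γ) * z + Real.sqrt (β * γ))
      = ((β * z + 1) / (z + γ)) / (Real.sqrt β / Real.sqrt γ) := by
    intro z
    rw [← mul_assoc, h1, h2, ← mul_add, div_div, mul_comm (z + γ)]
  rw [key x, key y]
  generalize Real.sqrt β / Real.sqrt γ = r at hr
  have e1 : ∀ a f : ℝ, r * a * (f / r) = a * f := by
    intro a f
    field_simp
  have e2 : ∀ f : ℝ, lam * r ^ Δ * (f / r) ^ Δ = lam * f ^ Δ := by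
    intro f
    rw [mul_assoc, ← mul_pow, mul_div_cancel₀ _ hr.ne']
  rw [e1, e1, e2, e2]
end

section
/- Suppose k > 2. Let f be an arity-k symmetric Boolean function (values w_0,…,w_k ∈ {0,1}) that is self-dual and satisfies w_0 = 0, and suppose f is neither the constant-0 function nor the function 𝟙[x_1⊕⋯⊕x_k = 1]. Then none of the following six functions is a polymorphism of f: the unary constant-0 function g_0; the unary constant-1 function g_1; the binary function AND; the binary function OR; the ternary majority function Maj(a,b,c) = (a∧b)∨(a∧c)∨(b∧c); and the ternary minority function a⊕b⊕c. -/
/-- The symmetric Boolean function of arity `k` determined by the values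
`w 0, …, w k`: it returns `w ℓ` on inputs with exactly `ℓ` ones. -/
def symBoolFun (k : ℕ) (w : ℕ → Bool) : (Fin k → Bool) → Bool :=
  fun x => w (Finset.univ.filter (fun j => x j = true)).card

/-- `g : {0,1}^m → {0,1}` is a polymorphism of `f : {0,1}^k → {0,1}`: for all
`m`-tuples of satisfying assignments of `f`, applying `g` coordinate-wise yields a
satisfying assignment of `f`. -/
def IsPolymorphism {m k : ℕ} (g : (Fin m → Bool) → Bool) (f : (Fin k → Bool) → Bool) :
    Prop :=
  ∀ x : Fin m → Fin k → Bool, (∀ i, f (x i) = true) →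
    f (fun j => g (fun i => x i j)) = true

lemma aux_sym (k : ℕ) (w : ℕ → Bool) (A : Finset ℕ) (hA : A ⊆ Finset.range k) :
    symBoolFun k w (fun j => decide (j.val ∈ A)) = w A.card := by
  unfold symBoolFun
  congr 1
  rw [← Finset.card_map Fin.valEmbedding]
  congr 1
  ext n
  simp only [Finset.mem_map, Finset.mem_filter, Finset.mem_univ, true_and, decide_eq_true_eq,
    Fin.valEmbedding_apply]
  constructor
  · rintro ⟨a, ha, rfl⟩
    exact ha
  · intro h
    exact ⟨⟨n, Finset.mem_range.1 (hA h)⟩, h, rfl⟩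

lemma aux_poly {m k : ℕ} {w : ℕ → Bool} {g : (Fin m → Bool) → Bool}
    (hg : IsPolymorphism g (symBoolFun k w)) (A : Fin m → Finset ℕ) (D : Finset ℕ)
    (hA : ∀ i, A i ⊆ Finset.range k) (hD : D ⊆ Finset.range k)
    (hw : ∀ i, w (A i).card = true)
    (h : ∀ j < k, g (fun i => decide (j ∈ A i)) = decide (j ∈ D)) : w D.card = true := by
  have := hg (fun i j => decide (j.val ∈ A i)) (fun i => by rw [aux_sym k w _ (hA i)]; exact hw i)
  rw [← aux_sym k w D hD, ← this]
  congr 1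
  funext j
  exact (h j j.2).symm

lemma aux_card (n t : ℕ) (h : n ≤ t) : (insert t (Finset.range n)).card = n + 1 := by
  rw [Finset.card_insert_of_notMem (by simp; omega), Finset.card_range]

lemma aux_sub (n t k : ℕ) (h : n ≤ k) (ht : t < k) :
    insert t (Finset.range n) ⊆ Finset.range k := by
  intro x hx
  simp at hx ⊢
  omega

/-- from the proof of Lemma 4.3: for `k > 2`, a self-dual symmetric
Boolean function `f` with `w 0 = 0` that is neither identically `0` nor the odd-parity
function has none of the six Schaefer polymorphisms: the constant-0 and constant-1 unary
functions, binary AND, binary OR, ternary majority, and ternary minority. -/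
theorem no_schaefer_polymorphism
    (k : ℕ) (hk : 2 < k) (w : ℕ → Bool)
    (hsd : ∀ ℓ ≤ k, w ℓ = w (k - ℓ)) (h0 : w 0 = false)
    (hnz : ¬ ∀ ℓ ≤ k, w ℓ = false)
    (hnodd : ¬ ∀ ℓ ≤ k, w ℓ = decide (ℓ % 2 = 1)) :
    ¬ IsPolymorphism (fun _ : Fin 1 → Bool => false) (symBoolFun k w) ∧
    ¬ IsPolymorphism (fun _ : Fin 1 → Bool => true) (symBoolFun k w) ∧
    ¬ IsPolymorphism (fun x : Fin 2 → Bool => x 0 && x 1) (symBoolFun k w) ∧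
    ¬ IsPolymorphism (fun x : Fin 2 → Bool => x 0 || x 1) (symBoolFun k w) ∧
    ¬ IsPolymorphism
        (fun x : Fin 3 → Bool => (x 0 && x 1) || (x 0 && x 2) || (x 1 && x 2))
        (symBoolFun k w) ∧
    ¬ IsPolymorphism (fun x : Fin 3 → Bool => Bool.xor (x 0) (Bool.xor (x 1) (x 2)))
        (symBoolFun k w) := by
  have hkk : w k = false := by rw [hsd k le_rfl]; simpa using h0
  have hex : ∃ a, a ≤ k ∧ w a = true := by
    push Not at hnz
    obtain ⟨a, ha, h⟩ := hnz
    exact ⟨a, ha, by simpa using h⟩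
  obtain ⟨a, ⟨hak, hwa⟩, hmin⟩ : ∃ a, (a ≤ k ∧ w a = true) ∧ ∀ b < a, w b = false := by
    refine ⟨Nat.find hex, Nat.find_spec hex, fun b hb => ?_⟩
    have h1 := Nat.find_min hex hb
    have h2 := (Nat.find_spec hex).1
    by_contra hc
    exact h1 ⟨by omega, by simpa using hc⟩
  have hapos : 0 < a := by
    rcases Nat.eq_zero_or_pos a with h | h
    · subst h; simp [h0] at hwa
    · exact h
  have hdual : w (k - a) = true := by rw [← hsd a hak]; exact hwa
  have hhalf : a ≤ k - a := by
    by_contra hc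
    have := hmin (k - a) (by omega)
    simp [hdual] at this
  obtain ⟨c, rfl⟩ : ∃ c, a = c + 1 := ⟨a - 1, by omega⟩
  have hc0 : w c = false := hmin c (by omega)
  have r1 : Finset.range (c+1) = insert c (Finset.range c) := Finset.range_add_one
  refine ⟨?_, ?_, ?_, ?_, ?_, ?_⟩
  · intro hg
    have := aux_poly hg (fun _ => insert c (Finset.range c)) ∅
      (fun _ => aux_sub _ _ _ (by omega) (by omega)) (by simp)
      (fun _ => by rw [aux_card _ _ le_rfl]; exact hwa) (by simp)
    simp [h0] at this
  · intro hg
    have := aux_poly hg (fun _ => insert c (Finset.range c)) (Finset.range k)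
      (fun _ => aux_sub _ _ _ (by omega) (by omega)) (by simp)
      (fun _ => by rw [aux_card _ _ le_rfl]; exact hwa) (by simp)
    simp [hkk] at this
  · intro hg
    have := aux_poly hg (fun i => insert (c + i.val) (Finset.range c)) (Finset.range c)
      (fun i => aux_sub _ _ _ (by omega) (by omega))
      (by intro x; simp; omega)
      (fun i => by rw [aux_card _ _ (by omega)]; exact hwa)
      (by intro j hj; rw [Bool.eq_iff_iff]; simp; omega)
    simp [hc0] at this
  · intro hg
    obtain ⟨d, hd⟩ : ∃ d, k - (c + 1) = d + 1 := ⟨k - (c+1) - 1, by omega⟩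
    have := aux_poly hg (fun i => insert (d + i.val) (Finset.range d)) (Finset.range (d + 2))
      (fun i => aux_sub _ _ _ (by omega) (by omega))
      (by intro x; simp; omega)
      (fun i => by rw [aux_card _ _ (by omega), ← hd]; exact hdual)
      (by intro j hj; rw [Bool.eq_iff_iff]; simp; omega)
    rw [Finset.card_range, hsd _ (by omega), show k - (d + 2) = c by omega, hc0] at this
    simp at this
  · intro hg
    have := aux_poly hg (fun i => insert (c + i.val) (Finset.range c)) (Finset.range c)
      (fun i => aux_sub _ _ _ (by omega) (by omega))
      (by intro x; simp; omega)
      (fun i => by rw [aux_card _ _ (by omega)]; exact hwa)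
      (by intro j hj; rw [Bool.eq_iff_iff]; simp; omega)
    simp [hc0] at this
  · intro hg
    have up : ∀ l, l + 2 ≤ k → w l = true → w (l + 2) = true := by
      intro l hl hwl
      obtain ⟨T, hT, hTc⟩ : ∃ T ⊆ Finset.range k \ {l, l + 1}, T.card = c := by
        apply Finset.exists_subset_card_eq
        rw [Finset.card_sdiff_of_subset (by intro x; simp; omega), Finset.card_range,
          Finset.card_pair (by omega)]
        omega
      have hTk : ∀ x ∈ T, x < k ∧ x ≠ l ∧ x ≠ l + 1 := by
        intro x hx
        have := hT hx
        simp at this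
        omega
      have hl0 : l ∉ T := fun h => (hTk l h).2.1 rfl
      have hl1 : l + 1 ∉ T := fun h => (hTk _ h).2.2 rfl
      have := aux_poly hg ![Finset.range l, insert l T, insert (l + 1) T] (Finset.range (l + 2))
        (by
          intro i x
          fin_cases i <;> simp
          · omega
          · rintro (h | h)
            · omega
            · exact (hTk x h).1
          · rintro (h | h)
            · omega
            · exact (hTk x h).1)
        (by intro x; simp; omega)
        (by
          intro i
          fin_cases i <;> simp [hl0, hl1, hTc, hwl, hwa])
        (by
          intro j hj
          by_cases hjl : j = l
          · subst hjl; simp [hl0]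
          by_cases hjl1 : j = l + 1
          · subst hjl1; simp [hl1]
          simp [hjl, hjl1]
          omega)
      simpa using this
    have step : ∀ l, l + 2 ≤ k → w (l + 2) = w l := by
      intro l hl
      rw [Bool.eq_iff_iff]
      refine ⟨fun h => ?_, up l hl⟩
      rw [hsd _ hl] at h
      have := up _ (by omega) h
      rwa [show k - (l + 2) + 2 = k - l by omega, ← hsd l (by omega)] at this
    have par : ∀ l, l ≤ k → w l = w (l % 2) := by
      intro l
      induction l using Nat.strong_induction_on with
      | _ l ih =>
        intro hl
        rcases Nat.lt_or_ge l 2 with h | h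
        · rw [Nat.mod_eq_of_lt h]
        · obtain ⟨n, rfl⟩ : ∃ n, l = n + 2 := ⟨l - 2, by omega⟩
          rw [step n hl, ih n (by omega) (by omega), Nat.add_mod_right]
    have hw1 : w 1 = true := by
      have := par _ hak
      rw [hwa] at this
      rcases Nat.mod_two_eq_zero_or_one (c + 1) with h | h
      · rw [h, h0] at this; simp at this
      · rw [h] at this; exact this.symm
    apply hnodd
    intro l hl
    rw [par l hl]
    rcases Nat.mod_two_eq_zero_or_one l with h | h
    · simp [h, h0]
    · simp [h, hw1]
end

section
/- Suppose k ≥ 3. Let f be a symmetric k-ary Boolean function that is not in EASY(k). Then either the arity-2 Boolean function AND is not a polymorphism of f, or the arity-2 Boolean function OR is not a polymorphism of f (or both). -/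
theorem aux_card_s14 (k a b : ℕ) (hb : b ≤ k) :
    (Finset.univ.filter (fun j : Fin k => a ≤ j.val ∧ j.val < b)).card = b - a := by
  rw [← Nat.card_Ico, ← Finset.card_map Fin.valEmbedding]
  congr 1
  ext x
  simp only [Finset.mem_map, Finset.mem_filter, Finset.mem_univ, true_and,
    Fin.valEmbedding_apply, Finset.mem_Ico]
  constructor
  · rintro ⟨j, hj, rfl⟩
    exact hj
  · intro hx
    exact ⟨⟨x, by omega⟩, hx, rfl⟩

theorem aux_sym_s14 (k a b n : ℕ) (w : ℕ → Bool) (x : Fin k → Bool) (hb : b ≤ k) (hn : b - a = n)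
    (hx : ∀ j : Fin k, x j = true ↔ a ≤ j.val ∧ j.val < b) : symBoolFun k w x = w n := by
  unfold symBoolFun
  simp only [hx]
  rw [aux_card_s14 k a b hb, hn]

/-- Lemma 4.5: for `k ≥ 3`, a symmetric Boolean function `f` that is
not one of the seven functions in `EASY(k)` fails to have AND or fails to have OR as a
polymorphism. -/
theorem not_and_or_not_or_polymorphism
    (k : ℕ) (hk : 3 ≤ k) (w : ℕ → Bool)
    (h1 : ¬ ∀ ℓ ≤ k, w ℓ = false)
    (h2 : ¬ ∀ ℓ ≤ k, w ℓ = true)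
    (h3 : ¬ ∀ ℓ ≤ k, w ℓ = decide (ℓ = 0))
    (h4 : ¬ ∀ ℓ ≤ k, w ℓ = decide (ℓ = k))
    (h5 : ¬ ∀ ℓ ≤ k, w ℓ = decide (ℓ = 0 ∨ ℓ = k))
    (h6 : ¬ ∀ ℓ ≤ k, w ℓ = decide (ℓ % 2 = 0))
    (h7 : ¬ ∀ ℓ ≤ k, w ℓ = decide (ℓ % 2 = 1)) :
    ¬ IsPolymorphism (fun x : Fin 2 → Bool => x 0 && x 1) (symBoolFun k w) ∨
    ¬ IsPolymorphism (fun x : Fin 2 → Bool => x 0 || x 1) (symBoolFun k w) := by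
  by_contra hcon
  rw [not_or, not_not, not_not] at hcon
  obtain ⟨hA, hO⟩ := hcon
  have hx : ∀ l, 0 < l → l < k → w l = true → w (l - 1) = true ∧ w (l + 1) = true := by
    intro l hl hlk hw
    let x : Fin 2 → Fin k → Bool := fun i j => decide (i.val ≤ j.val ∧ j.val < l + i.val)
    have hsat : ∀ i, symBoolFun k w (x i) = true := by
      intro i
      rw [aux_sym_s14 k i.val (l + i.val) l w (x i) (by omega) (by omega) (by intro j; simp [x])]
      exact hw
    constructor
    · rw [← hA x hsat]
      symm
      apply aux_sym_s14 k 1 l _ w _ (by omega) rfl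
      intro j
      simp [x]
      omega
    · rw [← hO x hsat]
      symm
      apply aux_sym_s14 k 0 (l + 1) _ w _ (by omega) rfl
      intro j
      simp [x]
      omega
  by_cases hin : ∃ l, 0 < l ∧ l < k ∧ w l = true
  · obtain ⟨l, hl, hlk, hw⟩ := hin
    have up : ∀ d, l + d ≤ k → w (l + d) = true := by
      intro d
      induction d with
      | zero => intro _; exact hw
      | succ d ih => intro h; exact (hx (l + d) (by omega) (by omega) (ih (by omega))).2
    have down : ∀ d, d ≤ l → w (l - d) = true := by
      intro d
      induction d with
      | zero => intro _; exact hw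
      | succ d ih => intro h; exact (hx (l - d) (by omega) (by omega) (ih (by omega))).1
    apply h2
    intro m hm
    rcases le_total l m with h | h
    · have := up (m - l) (by omega)
      rwa [show l + (m - l) = m by omega] at this
    · have := down (l - m) (by omega)
      rwa [show l - (l - m) = m by omega] at this
  · have hz : ∀ l, 0 < l → l < k → w l = false := by
      intro l a b
      by_contra hc
      exact hin ⟨l, a, b, by simpa using hc⟩
    have key : ∀ v : ℕ → Bool, v 0 = w 0 → v k = w k → (∀ l, 0 < l → l < k → v l = false) →
        ∀ l ≤ k, w l = v l := by
      intro v e0 ek em l hl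
      rcases Nat.eq_zero_or_pos l with rfl | hp
      · exact e0.symm
      · rcases Nat.lt_or_eq_of_le hl with h | rfl
        · rw [hz l hp h, em l hp h]
        · exact ek.symm
    have k0 : k ≠ 0 := by omega
    rcases hw0 : w 0 with _ | _ <;> rcases hwk : w k with _ | _
    · exact h1 (key (fun _ => false) (by simp [hw0]) (by simp [hwk]) (by simp))
    · exact h4 (key (fun l => decide (l = k)) (by simp [hw0]; omega) (by simp [hwk])
        (by intro l a b; simp; omega))
    · exact h3 (key (fun l => decide (l = 0)) (by simp [hw0]) (by simp [hwk]; omega)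
        (by intro l a b; simp; omega))
    · exact h5 (key (fun l => decide (l = 0 ∨ l = k)) (by simp [hw0]) (by simp [hwk])
        (by intro l a b; simp; omega))
end

section
/- For all integers n ≥ i ≥ 2, it holds that (1 + C(n,i))·(1 + C(n,i−2)) ≤ C(n,i−1)², and equality holds if and only if n = 2 and i = 2. -/
lemma aux_choose_ge (n : ℕ) : ∀ k, k + 1 < n → n ≤ n.choose (k + 1) := by
  induction n with
  | zero => intro k h; omega
  | succ n ih =>
    intro k h
    rcases k with _ | k
    · simp
    · rw [Nat.choose_succ_succ]
      have h1 := ih k (by omega)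
      have h2 : 0 < n.choose (k + 1 + 1) := Nat.choose_pos (by omega)
      simp only [Nat.succ_eq_add_one] at *
      omega

/-- Lemma 4.9: for all `n ≥ i ≥ 2`,
`(1 + C(n,i)) (1 + C(n,i-2)) ≤ C(n,i-1)²`, with equality iff `n = 2` and `i = 2`. -/
theorem binomial_strong_log_concavity (n i : ℕ) (h2 : 2 ≤ i) (hn : i ≤ n) :
    (1 + n.choose i) * (1 + n.choose (i - 2)) ≤ n.choose (i - 1) ^ 2 ∧
    ((1 + n.choose i) * (1 + n.choose (i - 2)) = n.choose (i - 1) ^ 2 ↔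
      n = 2 ∧ i = 2) := by
  obtain ⟨k, rfl⟩ := Nat.exists_eq_add_of_le' h2
  obtain ⟨m, rfl⟩ := Nat.exists_eq_add_of_le hn
  have e1 : k + 2 - 2 = k := by omega
  have e2 : k + 2 - 1 = k + 1 := by omega
  rw [e1, e2]
  have hb := aux_choose_ge (k + 2 + m) k (by omega)
  have ha := Nat.choose_succ_right_eq (k + 2 + m) k
  have hc := Nat.choose_succ_right_eq (k + 2 + m) (k + 1)
  have e3 : k + 2 + m - k = m + 2 := by omega
  have e4 : k + 2 + m - (k + 1) = m + 1 := by omega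
  rw [e3] at ha
  rw [e4] at hc
  have key : (1 + (k + 2 + m).choose (k + 2)) * (1 + (k + 2 + m).choose k) + (if k = 0 ∧ m = 0 then 0 else 1)
      ≤ (k + 2 + m).choose (k + 1) ^ 2 := by
    by_cases h0 : k = 0 ∧ m = 0
    · obtain ⟨rfl, rfl⟩ := h0
      decide
    · rw [if_neg h0]
      have hs : 1 ≤ k + m := by omega
      change (k + 2 + m).choose (k + 2) * (k + 2) = _ at hc
      generalize (k + 2 + m).choose (k + 2) = c at *
      generalize (k + 2 + m).choose (k + 1) = b at *
      generalize (k + 2 + m).choose k = a at *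
      rw [Nat.add_one_le_iff]
      have hD : (k + 2) * (m + 2) * ((1 + c) * (1 + a)) =
          (k + 2 + b * (m + 1)) * (m + 2 + b * (k + 1)) := by
        rw [← hc, ha]; ring
      apply lt_of_mul_lt_mul_left (a := (k + 2) * (m + 2)) _ (Nat.zero_le _)
      rw [hD]
      have h1 : b * (k + 2 + m) * (k + m + 3) ≤ b * b * (k + m + 3) := by gcongr
      have h2 : 2 * ((k + 1) * (m + 1)) * (k + 2 + m) ≤ 2 * ((k + 1) * (m + 1)) * b := by gcongr
      have h3 : (k + 2) * (m + 2) < 2 * ((k + 1) * (m + 1)) * (k + 2 + m) := by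
        have : 2 * ((k + 1) * (m + 1)) * 3 ≤ 2 * ((k + 1) * (m + 1)) * (k + 2 + m) := by
          gcongr; omega
        nlinarith [Nat.zero_le (k * m)]
      nlinarith
  split_ifs at key with h
  · obtain ⟨rfl, rfl⟩ := h
    decide
  · exact ⟨by omega, fun h' => by omega, fun h' => by omega⟩
end
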